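/- arXiv:1711.00889 — 5 statements merged into one kernel-verified Lean document; each statement's English description precedes it below -/
import Mathlib

section
/- For every measurable function D : Ω → ℝ with 0 < D(x) < 1 for all x, the GAN value satisfies f(D) ≤ f(D*); that is, ∫ log D dP + ∫ log(1 − D) dQ ≤ ∫ log(dP/d(P+Q)) dP + ∫ log(dQ/d(P+Q)) dQ, where the integrals are taken in the extended reals. -/
open MeasureTheory

/-!
Write `p` and `q` for the densities of `P` and `Q` with respect to `P + Q`, so that `p + q = 1`
almost everywhere. Integrating against `P + Q` reduces the claim to the pointwise bound
`-p log p - q log q ≤ -p log d - q log (1 - d)`, that is, to Gibbs' inequality for two weights,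
which is the sum of two tangent-line bounds for the logarithm.
-/

lemma negMulLog_add_le_mul_neg_log_add {a d : ℝ} (ha : 0 ≤ a) (hd : 0 < d) :
    Real.negMulLog a + a ≤ a * -Real.log d + d := by
  have tangent : Real.negMulLog (a / d) ≤ 1 - a / d :=
    Real.negMulLog_le_one_sub_self (div_nonneg ha hd.le)
  calc Real.negMulLog a + a
      = a / d * Real.negMulLog d + d * Real.negMulLog (a / d) + a := by
        rw [← Real.negMulLog_mul, mul_div_cancel₀ a hd.ne']
    _ ≤ a / d * Real.negMulLog d + d * (1 - a / d) + a := by gcongr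
    _ = a * -Real.log d + d := by rw [Real.negMulLog]; field_simp; ring

-- The linear terms are added on both sides because subtraction in `ℝ≥0∞` truncates.
lemma mul_ofReal_neg_log_add_le {p : ENNReal} (hp : p ≤ 1) {d : ℝ} (hd : 0 < d) :
    p * ENNReal.ofReal (-Real.log p.toReal) + p
      ≤ p * ENNReal.ofReal (-Real.log d) + ENNReal.ofReal d := by
  lift p to NNReal using ne_top_of_le_ne_top ENNReal.one_ne_top hp
  have mul_ofReal (t : ℝ) : (p : ENNReal) * ENNReal.ofReal t = ENNReal.ofReal (p * t) := by
    rw [ENNReal.ofReal_mul p.coe_nonneg, ENNReal.ofReal_coe_nnreal]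
  have entropy_nonneg : 0 ≤ Real.negMulLog p :=
    Real.negMulLog_nonneg p.coe_nonneg (by exact_mod_cast hp)
  calc (p : ENNReal) * ENNReal.ofReal (-Real.log p) + p
      = ENNReal.ofReal (Real.negMulLog p + p) := by
        rw [ENNReal.ofReal_add entropy_nonneg p.coe_nonneg, ENNReal.ofReal_coe_nnreal,
          mul_ofReal, Real.negMulLog, mul_neg, neg_mul]
    _ ≤ ENNReal.ofReal (p * -Real.log d + d) :=
        ENNReal.ofReal_le_ofReal (negMulLog_add_le_mul_neg_log_add p.coe_nonneg hd)
    _ ≤ ENNReal.ofReal (p * -Real.log d) + ENNReal.ofReal d := ENNReal.ofReal_add_le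
    _ = p * ENNReal.ofReal (-Real.log d) + ENNReal.ofReal d := by rw [mul_ofReal]

lemma gibbs_inequality_of_add_eq_one {p q : ENNReal} (hpq : p + q = 1)
    {d e : ℝ} (hd : 0 < d) (he : 0 < e) (hde : d + e ≤ 1) :
    p * ENNReal.ofReal (-Real.log p.toReal) + q * ENNReal.ofReal (-Real.log q.toReal)
      ≤ p * ENNReal.ofReal (-Real.log d) + q * ENNReal.ofReal (-Real.log e) := by
  have ofReal_add_le_one : ENNReal.ofReal d + ENNReal.ofReal e ≤ 1 := by
    rwa [← ENNReal.ofReal_add hd.le he.le, ENNReal.ofReal_le_one]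
  refine (ENNReal.add_le_add_iff_right ENNReal.one_ne_top).mp ?_
  calc p * ENNReal.ofReal (-Real.log p.toReal) + q * ENNReal.ofReal (-Real.log q.toReal) + 1
      = (p * ENNReal.ofReal (-Real.log p.toReal) + p)
          + (q * ENNReal.ofReal (-Real.log q.toReal) + q) := by rw [← hpq]; ring
    _ ≤ (p * ENNReal.ofReal (-Real.log d) + ENNReal.ofReal d)
          + (q * ENNReal.ofReal (-Real.log e) + ENNReal.ofReal e) :=
        add_le_add (mul_ofReal_neg_log_add_le (hpq ▸ le_self_add) hd)
          (mul_ofReal_neg_log_add_le (hpq ▸ le_add_self) he)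
    _ = p * ENNReal.ofReal (-Real.log d) + q * ENNReal.ofReal (-Real.log e)
          + (ENNReal.ofReal d + ENNReal.ofReal e) := by ring
    _ ≤ p * ENNReal.ofReal (-Real.log d) + q * ENNReal.ofReal (-Real.log e) + 1 := by gcongr

section RadonNikodym

variable {Ω : Type*} [MeasurableSpace Ω]

lemma lintegral_add_lintegral_eq_lintegral_rnDeriv {μ₁ μ₂ ν : Measure Ω}
    [μ₁.HaveLebesgueDecomposition ν] [μ₂.HaveLebesgueDecomposition ν]
    (h₁ : μ₁ ≪ ν) (h₂ : μ₂ ≪ ν)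
    {f g : Ω → ENNReal} (hf : AEMeasurable f ν) (hg : AEMeasurable g ν) :
    ∫⁻ x, f x ∂μ₁ + ∫⁻ x, g x ∂μ₂ = ∫⁻ x, μ₁.rnDeriv ν x * f x + μ₂.rnDeriv ν x * g x ∂ν := by
  rw [lintegral_add_left' (by fun_prop), lintegral_rnDeriv_mul h₁ hf, lintegral_rnDeriv_mul h₂ hg]

variable (P Q : Measure Ω) [SigmaFinite P] [SigmaFinite Q]

lemma rnDeriv_add_rnDeriv_eq_one :
    ∀ᵐ x ∂(P + Q), P.rnDeriv (P + Q) x + Q.rnDeriv (P + Q) x = 1 := by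
  filter_upwards [Measure.rnDeriv_add' P Q (P + Q), Measure.rnDeriv_self (P + Q)]
    with x hadd hself
  rw [← hself, hadd, Pi.add_apply]

theorem gan_value_le_optimal_general {D : Ω → ℝ} (hD : AEMeasurable D (P + Q))
    (hD01 : ∀ᵐ x ∂(P + Q), D x ∈ Set.Ioo (0 : ℝ) 1) :
    ∫⁻ x, ENNReal.ofReal (-Real.log ((P.rnDeriv (P + Q) x).toReal)) ∂P
      + ∫⁻ x, ENNReal.ofReal (-Real.log ((Q.rnDeriv (P + Q) x).toReal)) ∂Q
    ≤ ∫⁻ x, ENNReal.ofReal (-Real.log (D x)) ∂P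
      + ∫⁻ x, ENNReal.ofReal (-Real.log (1 - D x)) ∂Q := by
  have hP : P ≪ P + Q := Measure.AbsolutelyContinuous.rfl.add_right Q
  have hQ : Q ≪ P + Q := Measure.AbsolutelyContinuous.rfl.add_right' P
  rw [lintegral_add_lintegral_eq_lintegral_rnDeriv hP hQ (by fun_prop) (by fun_prop),
    lintegral_add_lintegral_eq_lintegral_rnDeriv hP hQ (by fun_prop) (by fun_prop)]
  apply lintegral_mono_ae
  filter_upwards [rnDeriv_add_rnDeriv_eq_one P Q, hD01] with x hsum ⟨hpos, hlt⟩
  exact gibbs_inequality_of_add_eq_one hsum hpos (sub_pos.mpr hlt) (add_sub_cancel _ _).le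

end RadonNikodym

/-- optimal discriminator, Lemma 1 of the paper.
For probability measures `P, Q` and any measurable `D : Ω → ℝ` with `0 < D x < 1` for all `x`,
the GAN value `f(D) = ∫ log D dP + ∫ log (1 - D) dQ` (an extended real, here encoded through
the negated nonnegative integrals, since all integrands `log D`, `log (1-D)`,
`log (dP/d(P+Q))`, `log (dQ/d(P+Q))` are (a.e.) nonpositive) satisfies `f(D) ≤ f(D*)` where
`D* = dP/d(P+Q)` and `1 - D* = dQ/d(P+Q)` a.e.  Negating turns this into the inequality below
between `ℝ≥0∞`-valued integrals. -/
theorem gan_value_le_optimal {Ω : Type*} [MeasurableSpace Ω]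
    (P Q : Measure Ω) [IsProbabilityMeasure P] [IsProbabilityMeasure Q]
    (D : Ω → ℝ) (hD : Measurable D) (hD01 : ∀ x, D x ∈ Set.Ioo (0 : ℝ) 1) :
    ∫⁻ x, ENNReal.ofReal (-Real.log ((P.rnDeriv (P + Q) x).toReal)) ∂P
      + ∫⁻ x, ENNReal.ofReal (-Real.log ((Q.rnDeriv (P + Q) x).toReal)) ∂Q
    ≤ ∫⁻ x, ENNReal.ofReal (-Real.log (D x)) ∂P
      + ∫⁻ x, ENNReal.ofReal (-Real.log (1 - D x)) ∂Q :=
  gan_value_le_optimal_general P Q hD.aemeasurable (.of_forall hD01)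
end

section
/- The value of the GAN objective at the optimal discriminator D* = dP/d(P+Q) satisfies the identity ∫ log(dP/d(P+Q)) dP + ∫ log(dQ/d(P+Q)) dQ = −log 4 + KL(P ∥ M) + KL(Q ∥ M), where M = (1/2)·(P + Q) is the midpoint measure. -/
open MeasureTheory
open scoped ENNReal Classical

/-- The Kullback–Leibler divergence `KL(μ ∥ ν) = ∫ log (dμ/dν) dμ` (an extended real) when
`μ ≪ ν` (and this integral is finite, i.e. the log-likelihood ratio is integrable;
for probability measures the integral is `+∞` otherwise), and `+∞` when `¬ μ ≪ ν`. -/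
noncomputable def klDiv {Ω : Type*} [MeasurableSpace Ω] (μ ν : Measure Ω) : EReal :=
  if μ ≪ ν ∧ Integrable (llr μ ν) μ then ((∫ x, llr μ ν x ∂μ : ℝ) : EReal) else ⊤

/-!
Since `P ≤ P + Q`, the density `dP/d(P+Q)` is at most `1`, and `t log t` is bounded on `[0, 1]`, so
`log (dP/d(P+Q))` is `P`-integrable and its integral is the finite number `KL(P ∥ P + Q)`.
Scaling the reference measure `P + Q` by `1/2` adds `log 2` to this divergence, and the same holds
for `Q`; the two contributions of `log 2` make up `log 4`.
-/

section

variable {Ω : Type*} [MeasurableSpace Ω] {μ ν : Measure Ω}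

lemma toReal_rnDeriv_le_one_of_le [SigmaFinite ν] (h : μ ≤ ν) :
    ∀ᵐ x ∂ν, (μ.rnDeriv ν x).toReal ≤ 1 := by
  filter_upwards [Measure.rnDeriv_le_one_of_le h] with x hx
  exact ENNReal.toReal_mono ENNReal.one_ne_top hx

lemma llr_nonpos_of_le [SigmaFinite ν] (h : μ ≤ ν) : llr μ ν ≤ᵐ[ν] 0 := by
  filter_upwards [toReal_rnDeriv_le_one_of_le h] with x hx
  exact Real.log_nonpos ENNReal.toReal_nonneg hx

lemma integrable_llr_of_le [IsFiniteMeasure ν] (h : μ ≤ ν) : Integrable (llr μ ν) μ := by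
  have : IsFiniteMeasure μ := isFiniteMeasure_of_le ν h
  rw [← integrable_rnDeriv_mul_log_iff (Measure.absolutelyContinuous_of_le h)]
  refine .of_bound (by fun_prop) 1 ?_
  filter_upwards [toReal_rnDeriv_le_one_of_le h] with x hx
  rcases (ENNReal.toReal_nonneg (a := μ.rnDeriv ν x)).eq_or_lt with h_zero | h_pos
  · simp [← h_zero]
  · rw [mul_comm]
    exact (Real.abs_log_mul_self_lt _ h_pos hx).le

lemma coe_integral_eq_neg_lintegral_of_nonpos {f : Ω → ℝ} (hf : Integrable f μ)
    (hf_nonpos : f ≤ᵐ[μ] 0) :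
    ((∫ x, f x ∂μ : ℝ) : EReal) = -((∫⁻ x, ENNReal.ofReal (-f x) ∂μ : ℝ≥0∞) : EReal) := by
  have h_nonneg : 0 ≤ᵐ[μ] -f := by
    filter_upwards [hf_nonpos] with x hx using neg_nonneg.2 hx
  have h_lintegral : ENNReal.ofReal (-∫ x, f x ∂μ) = ∫⁻ x, ENNReal.ofReal (-f x) ∂μ := by
    rw [← integral_neg]
    exact ofReal_integral_eq_lintegral_ofReal hf.neg h_nonneg
  have h_integral : 0 ≤ -∫ x, f x ∂μ := neg_nonneg.2 (integral_nonpos_of_ae hf_nonpos)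
  rw [← h_lintegral, EReal.coe_ennreal_ofReal, max_eq_left h_integral, EReal.coe_neg, neg_neg]

lemma klDiv_of_ac_of_integrable (hμν : μ ≪ ν) (h_int : Integrable (llr μ ν) μ) :
    klDiv μ ν = ((∫ x, llr μ ν x ∂μ : ℝ) : EReal) :=
  if_pos ⟨hμν, h_int⟩

lemma klDiv_eq_integral_llr_of_le [IsFiniteMeasure ν] (h : μ ≤ ν) :
    klDiv μ ν = ((∫ x, llr μ ν x ∂μ : ℝ) : EReal) :=
  klDiv_of_ac_of_integrable (Measure.absolutelyContinuous_of_le h) (integrable_llr_of_le h)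

lemma klDiv_eq_neg_lintegral_of_le [IsFiniteMeasure ν] (h : μ ≤ ν) :
    klDiv μ ν
      = -((∫⁻ x, ENNReal.ofReal (-Real.log (μ.rnDeriv ν x).toReal) ∂μ : ℝ≥0∞) : EReal) := by
  rw [klDiv_eq_integral_llr_of_le h]
  exact coe_integral_eq_neg_lintegral_of_nonpos (integrable_llr_of_le h)
    ((Measure.absolutelyContinuous_of_le h).ae_le (llr_nonpos_of_le h))

lemma absolutelyContinuous_smul_right_iff {c : ℝ≥0∞} (hc : c ≠ 0) : μ ≪ c • ν ↔ μ ≪ ν :=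
  ⟨fun h ↦ h.trans Measure.smul_absolutelyContinuous, fun h ↦ h.smul_right hc⟩

lemma integrable_llr_smul_right_iff [IsFiniteMeasure μ] [μ.HaveLebesgueDecomposition ν]
    (hμν : μ ≪ ν) {c : ℝ≥0∞} (hc : c ≠ 0) (hc_top : c ≠ ∞) :
    Integrable (llr μ (c • ν)) μ ↔ Integrable (llr μ ν) μ := by
  rw [integrable_congr (llr_smul_right hμν c hc hc_top)]
  simp only [sub_eq_add_neg, integrable_add_const_iff]

lemma klDiv_smul_right [IsFiniteMeasure μ] [μ.HaveLebesgueDecomposition ν] {c : ℝ≥0∞}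
    (hc : c ≠ 0) (hc_top : c ≠ ∞) :
    klDiv μ (c • ν) = klDiv μ ν - ((μ.real Set.univ * Real.log c.toReal : ℝ) : EReal) := by
  have h_ac : μ ≪ c • ν ↔ μ ≪ ν := absolutelyContinuous_smul_right_iff hc
  by_cases h : μ ≪ ν ∧ Integrable (llr μ ν) μ
  · obtain ⟨hμν, h_int⟩ := h
    rw [klDiv_of_ac_of_integrable hμν h_int,
      klDiv_of_ac_of_integrable (h_ac.2 hμν)
        ((integrable_llr_smul_right_iff hμν hc hc_top).2 h_int),
      integral_congr_ae (llr_smul_right hμν c hc hc_top),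
      integral_sub h_int (integrable_const _), integral_const, smul_eq_mul, EReal.coe_sub]
  · have h_smul : ¬(μ ≪ c • ν ∧ Integrable (llr μ (c • ν)) μ) := fun ⟨hμν, h_int⟩ ↦
      h ⟨h_ac.1 hμν, (integrable_llr_smul_right_iff (h_ac.1 hμν) hc hc_top).1 h_int⟩
    rw [klDiv, klDiv, if_neg h, if_neg h_smul, EReal.top_sub_coe]

lemma klDiv_two_inv_smul_right [IsProbabilityMeasure μ] [μ.HaveLebesgueDecomposition ν] :
    klDiv μ ((2 : ℝ≥0∞)⁻¹ • ν) = klDiv μ ν + ((Real.log 2 : ℝ) : EReal) := by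
  rw [klDiv_smul_right (by simp) (by simp)]
  simp [sub_eq_add_neg]

end

/-- The value of the GAN objective at the optimal discriminator
`D* = dP/d(P+Q)` (with `1 - D* = dQ/d(P+Q)` a.e.) satisfies
`∫ log (dP/d(P+Q)) dP + ∫ log (dQ/d(P+Q)) dQ = -log 4 + KL(P ∥ M) + KL(Q ∥ M)`,
where `M = (1/2)·(P+Q)`.  The left-hand side (an extended real, with a.e. nonpositive
integrands) is encoded as minus the sum of the corresponding `ℝ≥0∞`-valued integrals. -/
theorem gan_value_at_optimal_eq {Ω : Type*} [MeasurableSpace Ω]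
    (P Q : Measure Ω) [IsProbabilityMeasure P] [IsProbabilityMeasure Q] :
    -(((∫⁻ x, ENNReal.ofReal (-Real.log ((P.rnDeriv (P + Q) x).toReal)) ∂P
        + ∫⁻ x, ENNReal.ofReal (-Real.log ((Q.rnDeriv (P + Q) x).toReal)) ∂Q : ℝ≥0∞)) : EReal)
      = ((-Real.log 4 : ℝ) : EReal)
        + klDiv P ((2 : ℝ≥0∞)⁻¹ • (P + Q)) + klDiv Q ((2 : ℝ≥0∞)⁻¹ • (P + Q)) := by
  have hP : P ≤ P + Q := Measure.le_add_right le_rfl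
  have hQ : Q ≤ P + Q := Measure.le_add_left le_rfl
  have log_four : Real.log 4 = Real.log 2 + Real.log 2 := by
    rw [← Real.log_mul two_ne_zero two_ne_zero]
    norm_num
  rw [EReal.coe_ennreal_add, EReal.neg_add (by simp) (by simp), sub_eq_add_neg,
    ← klDiv_eq_neg_lintegral_of_le hP, ← klDiv_eq_neg_lintegral_of_le hQ,
    klDiv_two_inv_smul_right, klDiv_two_inv_smul_right,
    klDiv_eq_integral_llr_of_le hP, klDiv_eq_integral_llr_of_le hQ, log_four]
  norm_cast
  ring
end

section
/- Let g(P, Q) denote the supremum over all measurable D : Ω → ℝ with 0 < D < 1 of the GAN value f(D) = ∫ log D dP + ∫ log(1 − D) dQ. Then g(P, Q) ≥ −log 4 for all probability measures P and Q, and g(P, Q) = −log 4 if and only if P = Q. Moreover, when P = Q, the optimal discriminator satisfies D* = dP/d(P+Q) = 1/2 almost everywhere with respect to P + Q. -/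
open MeasureTheory
open scoped ENNReal

/-!
If `P = Q`, then pointwise `log D + log (1 - D) = log (D (1 - D)) ≤ log (1/4)`, so the constant
discriminator `1/2` is optimal and its value is `-log 4`. Conversely, suppose that `1/2` is optimal.
Perturbing it to a constant `c` on a measurable set `A` shows that
`c ↦ P(A) log c + Q(A) log (1 - c)` is maximal at `c = 1/2`, and the vanishing of its derivative
there says that `P(A) = Q(A)`.
-/

section

open Set (Ioo univ)

theorem half_mem_Ioo : (1 / 2 : ℝ) ∈ Ioo (0 : ℝ) 1 := by norm_num

theorem neg_log_nonneg_of_mem_Ioo {d : ℝ} (hd : d ∈ Ioo (0 : ℝ) 1) : 0 ≤ -Real.log d :=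
  neg_nonneg.2 (Real.log_nonpos hd.1.le hd.2.le)

theorem log_add_log_one_sub_le {d : ℝ} (hd : d ∈ Ioo (0 : ℝ) 1) :
    Real.log d + Real.log (1 - d) ≤ Real.log (1 / 2) + Real.log (1 - 1 / 2) := by
  have hd' := Set.Ioo.one_sub_mem hd
  have hprod : d * (1 - d) ≤ 1 / 2 * (1 - 1 / 2) := by linarith [sq_nonneg (d - 1 / 2)]
  rw [← Real.log_mul hd.1.ne' hd'.1.ne', ← Real.log_mul (by norm_num) (by norm_num)]
  exact Real.log_le_log (mul_pos hd.1 hd'.1) hprod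

theorem eq_of_isLocalMin_neg_log_mul_add_half {p q : ℝ}
    (h : IsLocalMin (fun c => -Real.log c * p + -Real.log (1 - c) * q) (1 / 2)) : p = q := by
  have hlog : HasDerivAt Real.log 2 (1 / 2) := by
    simpa using Real.hasDerivAt_log (x := 1 / 2) (by norm_num)
  have hlog' : HasDerivAt (fun c : ℝ => Real.log (1 - c)) (-2) (1 / 2) :=
    HasDerivAt.comp_const_sub 1 (1 / 2) (by rwa [sub_half])
  have hderiv := h.hasDerivAt_eq_zero ((hlog.neg.mul_const p).add (hlog'.neg.mul_const q))
  linarith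

variable {Ω : Type*} [MeasurableSpace Ω]

/-- The negated GAN value `-f(D)` of a discriminator `D`. The sign makes both integrands nonnegative
for `0 < D < 1`, so that the possibly infinite integrals are lower Lebesgue integrals. -/
noncomputable def ganLoss (P Q : Measure Ω) (D : Ω → ℝ) : ℝ≥0∞ :=
  ∫⁻ x, ENNReal.ofReal (-Real.log (D x)) ∂P + ∫⁻ x, ENNReal.ofReal (-Real.log (1 - D x)) ∂Q

/-- The optimal GAN value `g(P, Q)`: the supremum of `f(D) = -ganLoss P Q D` over all
discriminators, i.e. measurable functions `D` with `0 < D < 1`. -/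
noncomputable def ganSup (P Q : Measure Ω) : EReal :=
  ⨆ (D : Ω → ℝ) (_ : Measurable D) (_ : ∀ x, D x ∈ Ioo (0 : ℝ) 1), -(ganLoss P Q D : EReal)

theorem ganSup_le_neg_coe_iff {P Q : Measure Ω} {a : ℝ≥0∞} :
    ganSup P Q ≤ -(a : EReal) ↔
      ∀ D : Ω → ℝ, Measurable D → (∀ x, D x ∈ Ioo (0 : ℝ) 1) → a ≤ ganLoss P Q D := by
  simp only [ganSup, iSup_le_iff, EReal.neg_le_neg_iff, EReal.coe_ennreal_le_coe_ennreal_iff]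

theorem neg_ganLoss_le_ganSup (P Q : Measure Ω) {D : Ω → ℝ} (hD : Measurable D)
    (hD01 : ∀ x, D x ∈ Ioo (0 : ℝ) 1) : -(ganLoss P Q D : EReal) ≤ ganSup P Q :=
  le_iSup_of_le D (le_iSup₂_of_le hD hD01 le_rfl)

theorem ganLoss_const (P Q : Measure Ω) (c : ℝ) :
    ganLoss P Q (fun _ => c) =
      ENNReal.ofReal (-Real.log c) * P univ + ENNReal.ofReal (-Real.log (1 - c)) * Q univ := by
  simp only [ganLoss, lintegral_const]

theorem ganLoss_const_ne_top (P Q : Measure Ω) [IsFiniteMeasure P] [IsFiniteMeasure Q] (c : ℝ) :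
    ganLoss P Q (fun _ => c) ≠ ∞ := by
  rw [ganLoss_const]
  finiteness

theorem toReal_ganLoss_const (P Q : Measure Ω) [IsFiniteMeasure P] [IsFiniteMeasure Q]
    {c : ℝ} (hc : c ∈ Ioo (0 : ℝ) 1) :
    (ganLoss P Q (fun _ => c)).toReal =
      -Real.log c * P.real univ + -Real.log (1 - c) * Q.real univ := by
  rw [ganLoss_const, ENNReal.toReal_add (by finiteness) (by finiteness), ENNReal.toReal_mul,
    ENNReal.toReal_mul, ENNReal.toReal_ofReal (neg_log_nonneg_of_mem_Ioo hc),
    ENNReal.toReal_ofReal (neg_log_nonneg_of_mem_Ioo (Set.Ioo.one_sub_mem hc)), Measure.real,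
    Measure.real]

theorem toReal_ganLoss_half (P Q : Measure Ω) [IsFiniteMeasure P] [IsFiniteMeasure Q] :
    (ganLoss P Q (fun _ => 1 / 2)).toReal = Real.log 2 * (P.real univ + Q.real univ) := by
  rw [toReal_ganLoss_const P Q half_mem_Ioo, sub_half, one_div, Real.log_inv, neg_neg, mul_add]

theorem ganLoss_piecewise (P Q : Measure Ω) {A : Set Ω} [DecidablePred (· ∈ A)]
    (hA : MeasurableSet A) (D E : Ω → ℝ) :
    ganLoss P Q (A.piecewise D E) =
      ganLoss (P.restrict A) (Q.restrict A) D + ganLoss (P.restrict Aᶜ) (Q.restrict Aᶜ) E := by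
  simp only [ganLoss, A.apply_piecewise D E fun _ y => ENNReal.ofReal (-Real.log y),
    A.apply_piecewise D E fun _ y => ENNReal.ofReal (-Real.log (1 - y)), lintegral_piecewise hA]
  exact add_add_add_comm _ _ _ _

theorem ganLoss_self_half_le (P : Measure Ω) {D : Ω → ℝ} (hD : Measurable D)
    (hD01 : ∀ x, D x ∈ Ioo (0 : ℝ) 1) : ganLoss P P (fun _ => 1 / 2) ≤ ganLoss P P D := by
  have ofReal_add_neg_log {d : ℝ} (hd : d ∈ Ioo (0 : ℝ) 1) :
      ENNReal.ofReal (-Real.log d) + ENNReal.ofReal (-Real.log (1 - d)) =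
        ENNReal.ofReal (-(Real.log d + Real.log (1 - d))) := by
    rw [neg_add, ENNReal.ofReal_add (neg_log_nonneg_of_mem_Ioo hd)
      (neg_log_nonneg_of_mem_Ioo (Set.Ioo.one_sub_mem hd))]
  rw [ganLoss, ganLoss, ← lintegral_add_left (by fun_prop), ← lintegral_add_left (by fun_prop)]
  refine lintegral_mono fun x => ?_
  rw [ofReal_add_neg_log half_mem_Ioo, ofReal_add_neg_log (hD01 x)]
  exact ENNReal.ofReal_le_ofReal (neg_le_neg (log_add_log_one_sub_le (hD01 x)))

theorem measure_univ_eq_of_ganLoss_half_le (P Q : Measure Ω) [IsFiniteMeasure P]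
    [IsFiniteMeasure Q]
    (h : ∀ c ∈ Ioo (0 : ℝ) 1, ganLoss P Q (fun _ => 1 / 2) ≤ ganLoss P Q (fun _ => c)) :
    P univ = Q univ := by
  rw [← measureReal_eq_measureReal_iff]
  refine eq_of_isLocalMin_neg_log_mul_add_half ?_
  filter_upwards [Ioo_mem_nhds half_mem_Ioo.1 half_mem_Ioo.2] with c hc
  have hle := ENNReal.toReal_mono (ganLoss_const_ne_top P Q c) (h c hc)
  rwa [toReal_ganLoss_const P Q half_mem_Ioo, toReal_ganLoss_const P Q hc] at hle

theorem eq_of_ganLoss_half_le (P Q : Measure Ω) [IsFiniteMeasure P] [IsFiniteMeasure Q]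
    (h : ∀ D : Ω → ℝ, Measurable D → (∀ x, D x ∈ Ioo (0 : ℝ) 1) →
      ganLoss P Q (fun _ => 1 / 2) ≤ ganLoss P Q D) :
    P = Q := by
  classical
  ext A hA
  suffices P.restrict A univ = Q.restrict A univ by simpa using this
  refine measure_univ_eq_of_ganLoss_half_le _ _ fun c hc => ?_
  have hD01 (x : Ω) : A.piecewise (fun _ => c) (fun _ => 1 / 2) x ∈ Ioo (0 : ℝ) 1 := by
    rw [Set.piecewise]
    split_ifs
    exacts [hc, half_mem_Ioo]
  have hD := h _ (measurable_const.piecewise hA measurable_const) hD01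
  have hhalf := ganLoss_piecewise P Q hA (fun _ => 1 / 2) fun _ => 1 / 2
  rw [Set.piecewise_same] at hhalf
  rw [hhalf, ganLoss_piecewise P Q hA] at hD
  exact (ENNReal.add_le_add_iff_right (ganLoss_const_ne_top _ _ (1 / 2))).1 hD

theorem neg_ganLoss_half_le_ganSup (P Q : Measure Ω) :
    -(ganLoss P Q (fun _ => 1 / 2) : EReal) ≤ ganSup P Q :=
  neg_ganLoss_le_ganSup P Q measurable_const fun _ => half_mem_Ioo

theorem ganSup_eq_neg_ganLoss_half_iff (P Q : Measure Ω) [IsFiniteMeasure P] [IsFiniteMeasure Q] :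
    ganSup P Q = -(ganLoss P Q (fun _ => 1 / 2) : EReal) ↔ P = Q := by
  rw [← (neg_ganLoss_half_le_ganSup P Q).ge_iff_eq', ganSup_le_neg_coe_iff]
  refine ⟨eq_of_ganLoss_half_le P Q, ?_⟩
  rintro rfl D hD hD01
  exact ganLoss_self_half_le P hD hD01

theorem rnDeriv_self_add_self (P : Measure Ω) [SigmaFinite P] :
    ∀ᵐ x ∂(P + P), P.rnDeriv (P + P) x = 1 / 2 := by
  have h : ∀ᵐ x ∂P, P.rnDeriv (P + P) x = 1 / 2 := by
    filter_upwards [P.rnDeriv_add_self P, P.rnDeriv_self] with x hadd hself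
    rw [hadd, hself, one_add_one_eq_two, one_div]
  exact ae_add_measure_iff.2 ⟨h, h⟩

theorem gan_sup_ge_neg_log_four_general (P Q : Measure Ω) [IsFiniteMeasure P]
    [IsFiniteMeasure Q] :
    ((-(Real.log 2 * (P.real univ + Q.real univ)) : ℝ) : EReal) ≤ ganSup P Q ∧
      (ganSup P Q = ((-(Real.log 2 * (P.real univ + Q.real univ)) : ℝ) : EReal) ↔ P = Q) ∧
      (P = Q → ∀ᵐ x ∂(P + Q), P.rnDeriv (P + Q) x = 1 / 2) := by
  rw [← toReal_ganLoss_half, EReal.coe_neg,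
    EReal.coe_ennreal_toReal (ganLoss_const_ne_top P Q (1 / 2))]
  refine ⟨neg_ganLoss_half_le_ganSup P Q, ganSup_eq_neg_ganLoss_half_iff P Q, ?_⟩
  rintro rfl
  exact rnDeriv_self_add_self P

end

/-- Lemma 2 of the paper.  Let
`g(P,Q) = sup { f(D) : D measurable, 0 < D < 1 }` where
`f(D) = ∫ log D dP + ∫ log (1-D) dQ` is the GAN value (an extended real; since the
integrands are nonpositive, `f(D)` is encoded as minus the sum of the `ℝ≥0∞`-valued
integrals of `-log D` and `-log (1-D)`).  Then `g(P,Q) ≥ -log 4`, with equality iff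
`P = Q`; moreover when `P = Q` the optimal discriminator `D* = dP/d(P+Q)` equals `1/2`
`(P+Q)`-almost everywhere. -/
theorem gan_sup_ge_neg_log_four {Ω : Type*} [MeasurableSpace Ω]
    (P Q : Measure Ω) [IsProbabilityMeasure P] [IsProbabilityMeasure Q] :
    let g : EReal := ⨆ (D : Ω → ℝ) (_ : Measurable D) (_ : ∀ x, D x ∈ Set.Ioo (0 : ℝ) 1),
      -(((∫⁻ x, ENNReal.ofReal (-Real.log (D x)) ∂P
          + ∫⁻ x, ENNReal.ofReal (-Real.log (1 - D x)) ∂Q : ℝ≥0∞)) : EReal)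
    ((-Real.log 4 : ℝ) : EReal) ≤ g ∧
      (g = ((-Real.log 4 : ℝ) : EReal) ↔ P = Q) ∧
      (P = Q → ∀ᵐ x ∂(P + Q), P.rnDeriv (P + Q) x = 1 / 2) := by
  have log_four : Real.log 4 = Real.log 2 * (P.real Set.univ + Q.real Set.univ) := by
    rw [probReal_univ, probReal_univ, one_add_one_eq_two, mul_two,
      ← Real.log_mul two_ne_zero two_ne_zero, two_mul, two_add_two_eq_four]
  exact log_four ▸ gan_sup_ge_neg_log_four_general P Q
end

section
/- For every choice of the generator kernel G, the supremum over measurable discriminators D : X × Y → (0,1) of L_xy(D) = ∫ log D dΠ + ∫ log(1 − D) dπ_g^{xy} is at least −log 4, and it equals −log 4 if and only if Π = π_g^{xy}, i.e., if and only if the true joint p(x, y) equals the generator joint p(y)·p_g(x|y). At that point the optimal discriminator dΠ/d(Π + π_g^{xy}) equals 1/2 (Π + π_g^{xy})-almost everywhere. -/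
open MeasureTheory ProbabilityTheory
open scoped ENNReal ProbabilityTheory

/-!
The constant discriminator `1 / 2` gives the lower bound `-(P univ + Q univ) * log 2` for the value
of the game between finite measures `P` and `Q`, and this is `-log 4` when both are probability
measures. When `P = Q` no discriminator does better, by the pointwise inequality
`s * (1 - s) ≤ 1 / 4`. When `P A ≠ Q A` for some measurable set `A`, the constant discriminator is
strictly improved by moving it on `A` from `1 / 2` towards `P A / (P A + Q A)`.
-/

namespace SGAN

lemma neg_log_half : -Real.log (1 / 2) = Real.log 2 := by
  rw [one_div, Real.log_inv, neg_neg]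

lemma two_mul_log_two_le_neg_log_add_neg_log {s : ℝ} (hs : s ∈ Set.Ioo (0 : ℝ) 1) :
    2 * Real.log 2 ≤ -Real.log s + -Real.log (1 - s) := by
  have hs' : 0 < 1 - s := sub_pos.2 hs.2
  have hprod : 0 < s * (1 - s) := mul_pos hs.1 hs'
  have hlog : Real.log (2 ^ 2 * (s * (1 - s))) ≤ 0 :=
    Real.log_nonpos (by positivity) (by nlinarith [sq_nonneg (2 * s - 1)])
  rw [Real.log_mul (by norm_num) hprod.ne', Real.log_mul hs.1.ne' hs'.ne', Real.log_pow] at hlog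
  push_cast at hlog
  linarith

lemma two_mul_ofReal_log_two_le_ofReal_neg_log_add {s : ℝ} (hs : s ∈ Set.Ioo (0 : ℝ) 1) :
    2 * ENNReal.ofReal (Real.log 2) ≤
      ENNReal.ofReal (-Real.log s) + ENNReal.ofReal (-Real.log (1 - s)) := by
  calc 2 * ENNReal.ofReal (Real.log 2) = ENNReal.ofReal (2 * Real.log 2) := by
        rw [ENNReal.ofReal_mul zero_le_two, ENNReal.ofReal_ofNat]
    _ ≤ ENNReal.ofReal (-Real.log s + -Real.log (1 - s)) :=
        ENNReal.ofReal_le_ofReal (two_mul_log_two_le_neg_log_add_neg_log hs)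
    _ ≤ _ := ENNReal.ofReal_add_le

lemma exists_crossEntropy_lt_mul_log_two {p q : ℝ} (hp : 0 ≤ p) (hq : 0 ≤ q) (hpq : p ≠ q) :
    ∃ s ∈ Set.Ioo (0 : ℝ) 1,
      -Real.log s * p + -Real.log (1 - s) * q < (p + q) * Real.log 2 := by
  have hsum : 0 < p + q := by
    contrapose! hpq
    linarith
  have hu : 0 < 3 * p + q := by linarith
  have hv : 0 < p + 3 * q := by linarith
  -- The minimiser `p / (p + q)` may be `0` or `1`, so take its midpoint with `1 / 2` instead.
  let s := (3 * p + q) / (2 * (p + q)) / 2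
  have hs : 1 - s = (p + 3 * q) / (2 * (p + q)) / 2 := by
    simp only [s]
    field_simp
    ring
  have log_half_ge {x : ℝ} (hx : 0 < x) : 1 - x⁻¹ - Real.log 2 ≤ Real.log (x / 2) := by
    rw [Real.log_div hx.ne' two_ne_zero]
    linarith [Real.one_sub_inv_le_log_of_pos hx]
  have hlog_s : 1 - ((3 * p + q) / (2 * (p + q)))⁻¹ - Real.log 2 ≤ Real.log s :=
    log_half_ge (by positivity)
  have hlog_one_sub : 1 - ((p + 3 * q) / (2 * (p + q)))⁻¹ - Real.log 2 ≤ Real.log (1 - s) :=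
    hs ▸ log_half_ge (by positivity)
  have gain_eq : (1 - ((3 * p + q) / (2 * (p + q)))⁻¹) * p +
      (1 - ((p + 3 * q) / (2 * (p + q)))⁻¹) * q =
        (p - q) ^ 2 * (p + q) / ((3 * p + q) * (p + 3 * q)) := by
    field_simp
    ring
  have gain_pos : 0 < (p - q) ^ 2 * (p + q) / ((3 * p + q) * (p + 3 * q)) := by
    have := sub_ne_zero.2 hpq
    positivity
  refine ⟨s, ⟨by positivity, sub_pos.1 (hs ▸ by positivity)⟩, ?_⟩
  linarith [mul_le_mul_of_nonneg_right hlog_s hp, mul_le_mul_of_nonneg_right hlog_one_sub hq]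

lemma exists_ofReal_crossEntropy_lt_mul_log_two {p q : ℝ≥0∞} (hp : p ≠ ∞) (hq : q ≠ ∞)
    (hpq : p ≠ q) :
    ∃ s ∈ Set.Ioo (0 : ℝ) 1,
      ENNReal.ofReal (-Real.log s) * p + ENNReal.ofReal (-Real.log (1 - s)) * q <
        (p + q) * ENNReal.ofReal (Real.log 2) := by
  obtain ⟨s, hs, hlt⟩ := exists_crossEntropy_lt_mul_log_two p.toReal_nonneg q.toReal_nonneg
    (mt (ENNReal.toReal_eq_toReal_iff' hp hq).1 hpq)
  have hlog_s : 0 ≤ -Real.log s := neg_nonneg.2 (Real.log_nonpos hs.1.le hs.2.le)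
  have hlog_one_sub : 0 ≤ -Real.log (1 - s) :=
    neg_nonneg.2 (Real.log_nonpos (sub_nonneg.2 hs.2.le) (sub_le_self 1 hs.1.le))
  refine ⟨s, hs, (ENNReal.toReal_lt_toReal (by finiteness) (by finiteness)).1 ?_⟩
  rw [ENNReal.toReal_add (by finiteness) (by finiteness)]
  simpa only [ENNReal.toReal_mul, ENNReal.toReal_add hp hq, ENNReal.toReal_ofReal hlog_s,
    ENNReal.toReal_ofReal hlog_one_sub, ENNReal.toReal_ofReal (Real.log_nonneg one_le_two)]
    using hlt

section Game

variable {α : Type*} [MeasurableSpace α]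

lemma lintegral_comp_piecewise_const {β : Type*} (μ : Measure α) {A : Set α}
    [∀ a, Decidable (a ∈ A)] (hA : MeasurableSet A) (f : β → ℝ≥0∞) (s t : β) :
    ∫⁻ a, f (A.piecewise (fun _ => s) (fun _ => t) a) ∂μ = f s * μ A + f t * μ Aᶜ := by
  simp only [Set.apply_piecewise A _ _ (fun _ => f), lintegral_piecewise hA, setLIntegral_const]

lemma rnDeriv_add_self_eq_half (μ : Measure α) [SigmaFinite μ] :
    ∀ᵐ a ∂(μ + μ), μ.rnDeriv (μ + μ) a = 1 / 2 := by
  have h : ∀ᵐ a ∂μ, μ.rnDeriv (μ + μ) a = 1 / 2 := by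
    filter_upwards [Measure.rnDeriv_add_self μ μ, μ.rnDeriv_self] with a hadd hself
    rw [hadd, hself, one_add_one_eq_two, one_div]
  exact ae_add_measure_iff.2 ⟨h, h⟩

/-- The logarithmic loss `-∫ log D dP - ∫ log (1 - D) dQ` of a discriminator `D` with values in
`(0, 1)`; it takes values in `ℝ≥0∞`, so that a divergent integral counts as `∞`. -/
noncomputable def discriminatorLoss (P Q : Measure α) (D : α → ℝ) : ℝ≥0∞ :=
  ∫⁻ a, ENNReal.ofReal (-Real.log (D a)) ∂P + ∫⁻ a, ENNReal.ofReal (-Real.log (1 - D a)) ∂Q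

/-- The value of the adversarial game between the data measure `P` and the generator measure `Q`:
the supremum of `∫ log D dP + ∫ log (1 - D) dQ` over measurable discriminators `D` with values in
`(0, 1)`. -/
noncomputable def ganValue (P Q : Measure α) : EReal :=
  ⨆ (D : α → ℝ) (_ : Measurable D) (_ : ∀ a, D a ∈ Set.Ioo (0 : ℝ) 1),
    -(discriminatorLoss P Q D : EReal)

lemma neg_discriminatorLoss_le_ganValue (P Q : Measure α) {D : α → ℝ} (hD : Measurable D)
    (hD_mem : ∀ a, D a ∈ Set.Ioo (0 : ℝ) 1) :
    -(discriminatorLoss P Q D : EReal) ≤ ganValue P Q :=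
  le_iSup_of_le D (le_iSup_of_le hD (le_iSup_of_le hD_mem le_rfl))

lemma discriminatorLoss_half (P Q : Measure α) :
    discriminatorLoss P Q (fun _ => 1 / 2) =
      (P Set.univ + Q Set.univ) * ENNReal.ofReal (Real.log 2) := by
  simp only [discriminatorLoss, sub_half, neg_log_half, lintegral_const]
  ring

lemma mul_log_two_le_discriminatorLoss_self (P : Measure α) {D : α → ℝ} (hD : Measurable D)
    (hD_mem : ∀ a, D a ∈ Set.Ioo (0 : ℝ) 1) :
    (P Set.univ + P Set.univ) * ENNReal.ofReal (Real.log 2) ≤ discriminatorLoss P P D := by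
  calc (P Set.univ + P Set.univ) * ENNReal.ofReal (Real.log 2)
      = ∫⁻ _, 2 * ENNReal.ofReal (Real.log 2) ∂P := by
        rw [lintegral_const]
        ring
    _ ≤ ∫⁻ a, (ENNReal.ofReal (-Real.log (D a)) + ENNReal.ofReal (-Real.log (1 - D a))) ∂P :=
        lintegral_mono fun a => two_mul_ofReal_log_two_le_ofReal_neg_log_add (hD_mem a)
    _ = discriminatorLoss P P D := lintegral_add_left (by fun_prop) _

lemma exists_discriminatorLoss_lt_mul_log_two {P Q : Measure α} [IsFiniteMeasure P]
    [IsFiniteMeasure Q] (hPQ : P ≠ Q) :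
    ∃ D : α → ℝ, Measurable D ∧ (∀ a, D a ∈ Set.Ioo (0 : ℝ) 1) ∧
      discriminatorLoss P Q D < (P Set.univ + Q Set.univ) * ENNReal.ofReal (Real.log 2) := by
  classical
  obtain ⟨A, hA, hA_ne⟩ : ∃ A, MeasurableSet A ∧ P A ≠ Q A := by
    contrapose! hPQ
    exact Measure.ext hPQ
  obtain ⟨s, hs, hlt⟩ :=
    exists_ofReal_crossEntropy_lt_mul_log_two (measure_ne_top P A) (measure_ne_top Q A) hA_ne
  refine ⟨A.piecewise (fun _ => s) (fun _ => 1 / 2),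
    measurable_const.piecewise hA measurable_const, fun a => ?_, ?_⟩
  · by_cases ha : a ∈ A
    · simpa only [Set.piecewise_eq_of_mem _ _ _ ha] using hs
    · rw [Set.piecewise_eq_of_notMem _ _ _ ha]
      norm_num
  calc discriminatorLoss P Q (A.piecewise (fun _ => s) (fun _ => 1 / 2))
      = (ENNReal.ofReal (-Real.log s) * P A + ENNReal.ofReal (-Real.log (1 - s)) * Q A) +
          (P Aᶜ + Q Aᶜ) * ENNReal.ofReal (Real.log 2) := by
        rw [discriminatorLoss,
          lintegral_comp_piecewise_const P hA (fun x => ENNReal.ofReal (-Real.log x)),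
          lintegral_comp_piecewise_const Q hA (fun x => ENNReal.ofReal (-Real.log (1 - x))),
          sub_half, neg_log_half]
        ring
    _ < (P A + Q A) * ENNReal.ofReal (Real.log 2) +
          (P Aᶜ + Q Aᶜ) * ENNReal.ofReal (Real.log 2) :=
        ENNReal.add_lt_add_right (by finiteness) hlt
    _ = (P Set.univ + Q Set.univ) * ENNReal.ofReal (Real.log 2) := by
        rw [← measure_add_measure_compl (μ := P) hA, ← measure_add_measure_compl (μ := Q) hA]
        ring

lemma neg_mul_log_two_le_ganValue (P Q : Measure α) :
    -(((P Set.univ + Q Set.univ) * ENNReal.ofReal (Real.log 2) : ℝ≥0∞) : EReal) ≤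
      ganValue P Q := by
  rw [← discriminatorLoss_half]
  exact neg_discriminatorLoss_le_ganValue P Q measurable_const fun _ => by norm_num

lemma ganValue_self (P : Measure α) :
    ganValue P P =
      -(((P Set.univ + P Set.univ) * ENNReal.ofReal (Real.log 2) : ℝ≥0∞) : EReal) := by
  refine le_antisymm (iSup_le fun D => iSup_le fun hD => iSup_le fun hD_mem => ?_)
    (neg_mul_log_two_le_ganValue P P)
  exact EReal.neg_le_neg_iff.2 (EReal.coe_ennreal_le_coe_ennreal_iff.2
    (mul_log_two_le_discriminatorLoss_self P hD hD_mem))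

lemma neg_mul_log_two_lt_ganValue {P Q : Measure α} [IsFiniteMeasure P] [IsFiniteMeasure Q]
    (hPQ : P ≠ Q) :
    -(((P Set.univ + Q Set.univ) * ENNReal.ofReal (Real.log 2) : ℝ≥0∞) : EReal) <
      ganValue P Q := by
  obtain ⟨D, hD, hD_mem, hlt⟩ := exists_discriminatorLoss_lt_mul_log_two hPQ
  exact (EReal.neg_lt_neg_iff.2 (EReal.coe_ennreal_lt_coe_ennreal_iff.2 hlt)).trans_le
    (neg_discriminatorLoss_le_ganValue P Q hD hD_mem)

lemma neg_log_four_eq_neg_mul_log_two (P Q : Measure α) [IsProbabilityMeasure P]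
    [IsProbabilityMeasure Q] :
    ((-Real.log 4 : ℝ) : EReal) =
      -(((P Set.univ + Q Set.univ) * ENNReal.ofReal (Real.log 2) : ℝ≥0∞) : EReal) := by
  have hlog : Real.log 4 = 2 * Real.log 2 := by
    rw [show (4 : ℝ) = 2 ^ 2 by norm_num, Real.log_pow, Nat.cast_ofNat]
  have hnonneg : 0 ≤ 2 * Real.log 2 := by positivity
  rw [measure_univ, measure_univ, one_add_one_eq_two, ← ENNReal.ofReal_ofNat,
    ← ENNReal.ofReal_mul zero_le_two, EReal.coe_ennreal_ofReal, max_eq_left hnonneg, hlog,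
    EReal.coe_neg]

end Game

end SGAN

open SGAN in
theorem sgan_game_xy_general {α : Type*} [MeasurableSpace α] (P Q : Measure α)
    [IsFiniteMeasure P] [IsFiniteMeasure Q] :
    -(((P Set.univ + Q Set.univ) * ENNReal.ofReal (Real.log 2) : ℝ≥0∞) : EReal) ≤ ganValue P Q ∧
      (ganValue P Q =
          -(((P Set.univ + Q Set.univ) * ENNReal.ofReal (Real.log 2) : ℝ≥0∞) : EReal) ↔ P = Q) ∧
      (P = Q → ∀ᵐ a ∂(P + Q), P.rnDeriv (P + Q) a = 1 / 2) := by
  refine ⟨neg_mul_log_two_le_ganValue P Q, ⟨fun h => ?_, ?_⟩, ?_⟩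
  · by_contra hPQ
    exact (neg_mul_log_two_lt_ganValue hPQ).ne' h
  · rintro rfl
    exact ganValue_self P
  · rintro rfl
    exact rnDeriv_add_self_eq_half P

/-- Theorem 1 of the paper, the adversarial game `L_xy`.
For any Markov kernel `G : Y × Z → X` (generator), with `Π` the true joint data
distribution on `X × Y` and generator joint `πg` the pushforward of `(p_Y × p_Z) ⊗ₘ G`
under `((y,z),x) ↦ (x,y)`, the supremum over measurable discriminators
`D : X × Y → (0,1)` of `L_xy(D) = ∫ log D dΠ + ∫ log (1 - D) dπg` (extended-real
valued; encoded as minus the sum of the `ℝ≥0∞`-valued integrals of the nonnegative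
functions `-log D`, `-log (1-D)`) is at least `-log 4`, with equality iff `Π = πg`;
and at that point the optimal discriminator `dΠ/d(Π + πg)` equals `1/2` `(Π + πg)`-a.e. -/
theorem sgan_game_xy {X Y Z : Type*}
    [MeasurableSpace X] [MeasurableSpace Y] [MeasurableSpace Z]
    (Pi : Measure (X × Y)) [IsProbabilityMeasure Pi]
    (pY : Measure Y) [IsProbabilityMeasure pY]
    (pZ : Measure Z) [IsProbabilityMeasure pZ]
    (G : Kernel (Y × Z) X) [IsMarkovKernel G] :
    let πg : Measure (X × Y) := ((pY.prod pZ) ⊗ₘ G).map (fun q => (q.2, q.1.1))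
    let g : EReal := ⨆ (D : X × Y → ℝ) (_ : Measurable D)
        (_ : ∀ p, D p ∈ Set.Ioo (0 : ℝ) 1),
      -(((∫⁻ p, ENNReal.ofReal (-Real.log (D p)) ∂Pi
          + ∫⁻ p, ENNReal.ofReal (-Real.log (1 - D p)) ∂πg : ℝ≥0∞)) : EReal)
    ((-Real.log 4 : ℝ) : EReal) ≤ g ∧
      (g = ((-Real.log 4 : ℝ) : EReal) ↔ Pi = πg) ∧
      (Pi = πg → ∀ᵐ p ∂(Pi + πg), Pi.rnDeriv (Pi + πg) p = 1 / 2) := by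
  intro πg g
  have : IsProbabilityMeasure πg := Measure.isProbabilityMeasure_map (by fun_prop)
  exact SGAN.neg_log_four_eq_neg_mul_log_two Pi πg ▸ sgan_game_xy_general Pi πg
end

section
/- Let P be a probability measure on X with density p with respect to λ_X, let κ be a Markov kernel from X to Z with density k with respect to λ_Z, and let ρ be a probability measure on X × Z with density r with respect to λ_X ⊗ λ_Z such that ρ ≪ P ⊗ₘ κ. If the quantities −∫ log k(x, z) dρ(x, z), KL(ρ ∥ P ⊗ₘ κ) and ∫ log( r(x, z) / p(x) ) dρ(x, z) are all finite, then −∫ log k(x, z) dρ(x, z) = KL(ρ ∥ P ⊗ₘ κ) − ∫ log( r(x, z) / p(x) ) dρ(x, z). -/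
open MeasureTheory ProbabilityTheory
open scoped ENNReal NNReal ProbabilityTheory Classical

/-!
Relative to the common reference measure `λ_X ⊗ λ_Z`, the measure `ρ` has density `r` and
`P ⊗ₘ κ` has density `p(x) k(x, z)`. Hence `dρ/d(P ⊗ₘ κ) = r / (p k)`, and the identity is
`log (r / (p k)) = log (r / p) - log k`, integrated against `ρ`.
-/

section Density

variable {α : Type*} [MeasurableSpace α] {μ ν : Measure α}

lemma ae_withDensity_ne_zero {f : α → ℝ≥0∞} (hf : AEMeasurable f μ) :
    ∀ᵐ x ∂μ.withDensity f, f x ≠ 0 :=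
  (ae_withDensity_iff' hf).2 (ae_of_all _ fun _ hx => hx)

lemma rnDeriv_withDensity_withDensity [SigmaFinite μ] {f g : α → ℝ≥0}
    (hf : AEMeasurable f μ) (hg : AEMeasurable g μ) :
    (μ.withDensity fun x => (f x : ℝ≥0∞)).rnDeriv (μ.withDensity fun x => (g x : ℝ≥0∞))
      =ᵐ[μ.withDensity fun x => (g x : ℝ≥0∞)] fun x => (f x : ℝ≥0∞) / g x := by
  have hfμ := withDensity_absolutelyContinuous μ fun x => (f x : ℝ≥0∞)
  have hgμ := withDensity_absolutelyContinuous μ fun x => (g x : ℝ≥0∞)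
  filter_upwards [Measure.rnDeriv_eq_div hfμ hgμ,
    hgμ.ae_le (Measure.rnDeriv_withDensity₀ μ hf.coe_nnreal_ennreal),
    hgμ.ae_le (Measure.rnDeriv_withDensity₀ μ hg.coe_nnreal_ennreal)] with x hdiv hfx hgx
  rw [hdiv, hfx, hgx]

lemma llr_withDensity_withDensity [SigmaFinite μ] {f g : α → ℝ≥0}
    (hf : AEMeasurable f μ) (hg : AEMeasurable g μ)
    (hac : (μ.withDensity fun x => (f x : ℝ≥0∞)) ≪ μ.withDensity fun x => (g x : ℝ≥0∞)) :
    llr (μ.withDensity fun x => (f x : ℝ≥0∞)) (μ.withDensity fun x => (g x : ℝ≥0∞))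
      =ᵐ[μ.withDensity fun x => (f x : ℝ≥0∞)] fun x => Real.log ((f x : ℝ) / g x) := by
  filter_upwards [hac.ae_le (rnDeriv_withDensity_withDensity hf hg)] with x hx
  rw [llr, hx, ENNReal.toReal_div, ENNReal.coe_toReal, ENNReal.coe_toReal]

lemma klDiv_eq_integral_of_llr_ae_eq {f : α → ℝ} (hac : μ ≪ ν) (hf : Integrable f μ)
    (hllr : llr μ ν =ᵐ[μ] f) : klDiv μ ν = ((∫ x, f x ∂μ : ℝ) : EReal) := by
  rw [klDiv, if_pos ⟨hac, hf.congr hllr.symm⟩, integral_congr_ae hllr]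

end Density

section CompProd

variable {X Z : Type*} [MeasurableSpace X] [MeasurableSpace Z]
  {lamX : Measure X} {lamZ : Measure Z} {κ : Kernel X Z} {k : X × Z → ℝ≥0}

lemma withDensity_compProd_eq_prod_withDensity [SFinite lamX] [SFinite lamZ]
    {p : X → ℝ≥0∞} (hp : Measurable p) (hk : Measurable k)
    (hκ : ∀ x, κ x = lamZ.withDensity fun z => (k (x, z) : ℝ≥0∞)) :
    lamX.withDensity p ⊗ₘ κ = (lamX.prod lamZ).withDensity fun q => p q.1 * k q := by
  have hk' : Measurable (Function.uncurry fun x z => (k (x, z) : ℝ≥0∞)) := hk.coe_nnreal_ennreal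
  have hκ' : κ = (Kernel.const X lamZ).withDensity fun x z => (k (x, z) : ℝ≥0∞) := by
    ext1 x
    rw [hκ, Kernel.withDensity_apply _ hk', Kernel.const_apply]
  rw [hκ', Measure.compProd_withDensity hk', Measure.compProd_const, prod_withDensity_left hp]
  exact (withDensity_mul _ (hp.comp measurable_fst) hk.coe_nnreal_ennreal).symm

lemma llr_withDensity_compProd [SigmaFinite lamX] [SigmaFinite lamZ]
    {p : X → ℝ≥0} (hp : Measurable p) (hk : Measurable k)
    (hκ : ∀ x, κ x = lamZ.withDensity fun z => (k (x, z) : ℝ≥0∞))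
    {r : X × Z → ℝ≥0} (hr : Measurable r)
    (hac : ((lamX.prod lamZ).withDensity fun q => (r q : ℝ≥0∞))
      ≪ (lamX.withDensity fun x => (p x : ℝ≥0∞)) ⊗ₘ κ) :
    llr ((lamX.prod lamZ).withDensity fun q => (r q : ℝ≥0∞))
        ((lamX.withDensity fun x => (p x : ℝ≥0∞)) ⊗ₘ κ)
      =ᵐ[(lamX.prod lamZ).withDensity fun q => (r q : ℝ≥0∞)]
        fun q => Real.log ((r q : ℝ) / p q.1) - Real.log (k q) := by
  have hpk : Measurable fun q : X × Z => p q.1 * k q := by fun_prop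
  have hdensity : (lamX.withDensity fun x => (p x : ℝ≥0∞)) ⊗ₘ κ
      = (lamX.prod lamZ).withDensity fun q => ((p q.1 * k q : ℝ≥0) : ℝ≥0∞) := by
    simp only [withDensity_compProd_eq_prod_withDensity hp.coe_nnreal_ennreal hk hκ,
      ENNReal.coe_mul]
  rw [hdensity] at hac ⊢
  filter_upwards [llr_withDensity_withDensity hr.aemeasurable hpk.aemeasurable hac,
    ae_withDensity_ne_zero hr.coe_nnreal_ennreal.aemeasurable,
    hac.ae_le (ae_withDensity_ne_zero hpk.coe_nnreal_ennreal.aemeasurable)] with q hllr hr0 hpk0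
  rw [ENNReal.coe_ne_zero] at hr0 hpk0
  have hrp : (r q : ℝ) / p q.1 ≠ 0 := by
    exact_mod_cast div_ne_zero hr0 (left_ne_zero_of_mul hpk0)
  have hk0 : (k q : ℝ) ≠ 0 := by exact_mod_cast right_ne_zero_of_mul hpk0
  rw [hllr, NNReal.coe_mul, ← div_div, Real.log_div hrp hk0]

end CompProd

theorem negLog_kernel_density_eq_klDiv_sub_general {X Z : Type*}
    [MeasurableSpace X] [MeasurableSpace Z]
    (lamX : Measure X) [SigmaFinite lamX] (lamZ : Measure Z) [SigmaFinite lamZ]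
    (p : X → ℝ≥0) (hp : Measurable p)
    (P : Measure X) (hP : P = lamX.withDensity fun x => (p x : ℝ≥0∞))
    (κ : Kernel X Z) (k : X × Z → ℝ≥0) (hk : Measurable k)
    (hκ : ∀ x, κ x = lamZ.withDensity fun z => (k (x, z) : ℝ≥0∞))
    (r : X × Z → ℝ≥0) (hr : Measurable r)
    (ρ : Measure (X × Z)) (hρ : ρ = (lamX.prod lamZ).withDensity fun q => (r q : ℝ≥0∞))
    (hac : ρ ≪ P ⊗ₘ κ)
    (hlogk : Integrable (fun q => Real.log (k q : ℝ)) ρ)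
    (hlogrp : Integrable (fun q => Real.log ((r q : ℝ) / (p q.1 : ℝ))) ρ) :
    klDiv ρ (P ⊗ₘ κ)
      = ((∫ q, Real.log ((r q : ℝ) / (p q.1 : ℝ)) ∂ρ - ∫ q, Real.log (k q : ℝ) ∂ρ : ℝ) :
        EReal) := by
  subst hP hρ
  rw [klDiv_eq_integral_of_llr_ae_eq hac (hlogrp.sub hlogk)
    (llr_withDensity_compProd hp hk hκ hr hac)]
  exact congrArg _ (integral_sub hlogrp hlogk)

/-- decomposition of the latent reconstruction loss, key identity in the
proof of Theorem 3 of the paper.  Let `P = p • λ_X` be a probability measure on `X`,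
`κ` a Markov kernel from `X` to `Z` with density `k` w.r.t. `λ_Z`, and
`ρ = r • (λ_X ⊗ λ_Z)` a probability measure on `X × Z` with `ρ ≪ P ⊗ₘ κ`.  If
`-∫ log k dρ`, `KL(ρ ∥ P ⊗ₘ κ)` and `∫ log (r/(p ∘ fst)) dρ` are all finite, then
`-∫ log k dρ = KL(ρ ∥ P ⊗ₘ κ) - ∫ log (r(x,z)/p(x)) dρ(x,z)`. -/
theorem negLog_kernel_density_eq_klDiv_sub {X Z : Type*}
    [MeasurableSpace X] [MeasurableSpace Z]
    (lamX : Measure X) [SigmaFinite lamX] (lamZ : Measure Z) [SigmaFinite lamZ]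
    (p : X → ℝ≥0) (hp : Measurable p)
    (P : Measure X) [IsProbabilityMeasure P]
    (hP : P = lamX.withDensity fun x => (p x : ℝ≥0∞))
    (κ : Kernel X Z) [IsMarkovKernel κ]
    (k : X × Z → ℝ≥0) (hk : Measurable k)
    (hκ : ∀ x, κ x = lamZ.withDensity fun z => (k (x, z) : ℝ≥0∞))
    (r : X × Z → ℝ≥0) (hr : Measurable r)
    (ρ : Measure (X × Z)) [IsProbabilityMeasure ρ]
    (hρ : ρ = (lamX.prod lamZ).withDensity fun q => (r q : ℝ≥0∞))
    (hac : ρ ≪ P ⊗ₘ κ)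
    (h1 : Integrable (fun q => Real.log (k q : ℝ)) ρ)
    (h2 : klDiv ρ (P ⊗ₘ κ) ≠ ⊤)
    (h3 : Integrable (fun q => Real.log ((r q : ℝ) / (p q.1 : ℝ))) ρ) :
    -∫ q, Real.log (k q : ℝ) ∂ρ
      = (klDiv ρ (P ⊗ₘ κ)).toReal - ∫ q, Real.log ((r q : ℝ) / (p q.1 : ℝ)) ∂ρ := by
  rw [negLog_kernel_density_eq_klDiv_sub_general lamX lamZ p hp P hP κ k hk hκ r hr ρ hρ hac h1 h3,
    EReal.toReal_coe, sub_sub_cancel_left]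
end
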